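/- Let h be a real-valued C^4 function on a neighborhood of (0,0) in ℝ² with h(0,0) = 0, h_u(0,0) = 0, h_uu(0,0) = 0, and h_uw(0,0) = 0 (umbilic–inflexion end point condition a = b = 0). Define N₁, N₂, N₃ as in the extended curvature-line equation, set F(u,w,p) = N₁(u,w)p² + N₂(u,w)p + w·N₃(u,w), and let X be the Lie–Cartan vector field X(u,w,p) = (F_p, p·F_p, −(F_u + p·F_w)). Put a₃₀ = h_uuu(0,0), a₂₁ = h_uuw(0,0), a₁₂ = h_uww(0,0). Then for every p ∈ ℝ: (i) X(0,0,p) = (0, 0, p(a₃₀ + 2a₂₁p + a₁₂p²)), so the singularities of X along the axis {u = 0, w = 0} are exactly the solutions of p(a₃₀ + 2a₂₁p + a₁₂p²) = 0; and (ii) the characteristic polynomial of the Jacobian matrix DX(0,0,p) is λ·(λ + (a₃₀ + 3a₂₁p + 2a₁₂p²))·(λ − (a₃₀ + 4a₂₁p + 3a₁₂p²)); i.e., the eigenvalues of DX(0,0,p) are λ₁(p) = −(a₃₀ + 3a₂₁p + 2a₁₂p²), λ₂(p) = a₃₀ + 4a₂₁p + 3a₁₂p², and λ₃ = 0. -/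

import Mathlib

noncomputable section

/-- Partial derivative with respect to the first variable. -/
def pdu (f : ℝ × ℝ → ℝ) (p : ℝ × ℝ) : ℝ := fderiv ℝ f p (1, 0)

/-- Partial derivative with respect to the second variable. -/
def pdw (f : ℝ × ℝ → ℝ) (p : ℝ × ℝ) : ℝ := fderiv ℝ f p (0, 1)

/-- Coefficient `N₁` of the extended curvature-line equation of the end chart. -/
def N1 (h : ℝ × ℝ → ℝ) (p : ℝ × ℝ) : ℝ :=
  p.2 * pdw (pdw h) p * (pdu h p * (p.2 * pdw h p - h p) - p.1)
    - (1 + p.1 ^ 2 + (p.2 * pdw h p - h p) ^ 2) * pdw (pdu h) p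

/-- Coefficient `N₂` of the extended curvature-line equation of the end chart. -/
def N2 (h : ℝ × ℝ → ℝ) (p : ℝ × ℝ) : ℝ :=
  p.2 ^ 2 * (1 + (pdu h p) ^ 2) * pdw (pdw h) p
    - (1 + p.1 ^ 2 + (p.2 * pdw h p - h p) ^ 2) * pdu (pdu h) p

/-- Coefficient `N₃` of the extended curvature-line equation of the end chart. -/
def N3 (h : ℝ × ℝ → ℝ) (p : ℝ × ℝ) : ℝ :=
  p.2 * (1 + (pdu h p) ^ 2) * pdw (pdu h) p
    - (pdu h p * (p.2 * pdw h p - h p) - p.1) * pdu (pdu h) p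

/-! At a point of `ℝ³` where `F_p` and `F_pp` vanish, the second row of `DX` is `p` times the first
one and the first two entries of the third column are zero. Hence `DX` has the eigenvalues `0`,
`μ = F_up + p F_wp` and, by the symmetry of the second derivatives of `F`, `-(μ + F_w)`.
For `F = A p² + B p + C` both conditions hold for every `p` over a common zero of `A` and `B`, where
`μ` and `F_w` only involve the first derivatives of the coefficients. At an umbilic–inflexion end
point the differentials of `N₁`, `N₂` and `w N₃` are those of `-h_uw`, `-h_uu` and `0`. -/

section Calculus

variable {𝕜 E G : Type*} [NontriviallyNormedField 𝕜] [NormedAddCommGroup E] [NormedSpace 𝕜 E]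
  [NormedAddCommGroup G] [NormedSpace 𝕜 G]

theorem fderiv_fderiv_apply_const {f : E → G} {x : E} (hf : DifferentiableAt 𝕜 (fderiv 𝕜 f) x)
    (v w : E) : fderiv 𝕜 (fun y => fderiv 𝕜 f y v) x w = fderiv 𝕜 (fderiv 𝕜 f) x w v := by
  simp [fderiv_clm_apply hf (differentiableAt_const v)]

theorem differentiableAt_fderiv_of_contDiffAt {f : E → G} {x : E} (hf : ContDiffAt 𝕜 2 f x) :
    DifferentiableAt 𝕜 (fderiv 𝕜 f) x :=
  (hf.fderiv_right (m := 1) (by norm_num)).differentiableAt one_ne_zero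

theorem fderiv_mul_of_eq_zero {a b : E → 𝕜} {x : E} (ha : DifferentiableAt 𝕜 a x)
    (hb : DifferentiableAt 𝕜 b x) (ha0 : a x = 0) (hb0 : b x = 0) :
    fderiv 𝕜 (fun y => a y * b y) x = 0 := by
  ext v
  simp [fderiv_fun_mul ha hb, ha0, hb0]

theorem fderiv_mul_sub_mul_of_eq_zero {a b e c : E → 𝕜} {x : E} (ha : DifferentiableAt 𝕜 a x)
    (hb : DifferentiableAt 𝕜 b x) (he : DifferentiableAt 𝕜 e x) (hc : DifferentiableAt 𝕜 c x)
    (ha0 : a x = 0) (hb0 : b x = 0) (he1 : e x = 1) (hc0 : c x = 0) :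
    fderiv 𝕜 (fun y => a y * b y - e y * c y) x = -fderiv 𝕜 c x := by
  rw [fderiv_fun_sub (ha.fun_mul hb) (he.fun_mul hc), fderiv_mul_of_eq_zero ha hb ha0 hb0,
    fderiv_fun_mul he hc]
  ext v
  simp [he1, hc0]

end Calculus

section PartialDerivatives

variable {f : ℝ × ℝ → ℝ} {q : ℝ × ℝ} {m n : WithTop ℕ∞}

theorem fderiv_apply_eq_pdu_pdw (f : ℝ × ℝ → ℝ) (q v : ℝ × ℝ) :
    fderiv ℝ f q v = v.1 * pdu f q + v.2 * pdw f q := by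
  have hv : v = v.1 • (1, 0) + v.2 • (0, 1) := by ext <;> simp
  conv_lhs => rw [hv]
  simp only [map_add, map_smul, smul_eq_mul, pdu, pdw]

theorem contDiffAt_pdu (hf : ContDiffAt ℝ n f q) (hmn : m + 1 ≤ n) : ContDiffAt ℝ m (pdu f) q :=
  (hf.fderiv_right hmn).clm_apply contDiffAt_const

theorem contDiffAt_pdw (hf : ContDiffAt ℝ n f q) (hmn : m + 1 ≤ n) : ContDiffAt ℝ m (pdw f) q :=
  (hf.fderiv_right hmn).clm_apply contDiffAt_const

theorem pdu_pdw_comm (hf : ContDiffAt ℝ 2 f q) : pdu (pdw f) q = pdw (pdu f) q := by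
  have hf' := differentiableAt_fderiv_of_contDiffAt hf
  calc pdu (pdw f) q = fderiv ℝ (fderiv ℝ f) q (1, 0) (0, 1) := fderiv_fderiv_apply_const hf' _ _
    _ = fderiv ℝ (fderiv ℝ f) q (0, 1) (1, 0) := hf.isSymmSndFDerivAt (by simp) _ _
    _ = pdw (pdu f) q := (fderiv_fderiv_apply_const hf' _ _).symm

end PartialDerivatives

section LieCartan

/-- The Lie–Cartan vector field `(F_p, p F_p, -(F_u + p F_w))` of the implicit differential equation
`F (u, w, p) = 0`, `p = dw/du`. -/
def lieCartanField (F : ℝ × ℝ × ℝ → ℝ) (x : ℝ × ℝ × ℝ) : ℝ × ℝ × ℝ :=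
  (fderiv ℝ F x (0, 0, 1), x.2.2 * fderiv ℝ F x (0, 0, 1),
    -(fderiv ℝ F x (1, 0, 0) + x.2.2 * fderiv ℝ F x (0, 1, 0)))

/-- The Jacobian matrix of a vector field on `ℝ³`, in the coordinates `(u, w, p)`; its columns are
the partial derivatives of the field. -/
def jacobianMatrix (X : ℝ × ℝ × ℝ → ℝ × ℝ × ℝ) (x : ℝ × ℝ × ℝ) : Matrix (Fin 3) (Fin 3) ℝ :=
  let c1 := fderiv ℝ X x (1, 0, 0)
  let c2 := fderiv ℝ X x (0, 1, 0)
  let c3 := fderiv ℝ X x (0, 0, 1)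
  !![c1.1, c2.1, c3.1; c1.2.1, c2.2.1, c3.2.1; c1.2.2, c2.2.2, c3.2.2]

variable {F : ℝ × ℝ × ℝ → ℝ} {x : ℝ × ℝ × ℝ}

theorem map_contact_direction {G : Type*} [AddCommGroup G] [Module ℝ G] [TopologicalSpace G]
    (L : ℝ × ℝ × ℝ →L[ℝ] G) (p : ℝ) : L (1, p, 0) = L (1, 0, 0) + p • L (0, 1, 0) := by
  rw [← map_smul, ← map_add]
  simp

theorem lieCartanField_of_fderiv_eq_zero (hp : fderiv ℝ F x (0, 0, 1) = 0) :
    lieCartanField F x = (0, 0, -fderiv ℝ F x (1, x.2.2, 0)) := by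
  rw [lieCartanField, hp, mul_zero, map_contact_direction _ x.2.2, smul_eq_mul]

theorem fderiv_lieCartanField_apply (hF : DifferentiableAt ℝ (fderiv ℝ F) x) (v : ℝ × ℝ × ℝ) :
    fderiv ℝ (lieCartanField F) x v =
      (fderiv ℝ (fderiv ℝ F) x v (0, 0, 1),
        x.2.2 * fderiv ℝ (fderiv ℝ F) x v (0, 0, 1) + v.2.2 * fderiv ℝ F x (0, 0, 1),
        -(fderiv ℝ (fderiv ℝ F) x v (1, 0, 0) + x.2.2 * fderiv ℝ (fderiv ℝ F) x v (0, 1, 0)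
          + v.2.2 * fderiv ℝ F x (0, 1, 0))) := by
  have hasFDerivAt_partial (e : ℝ × ℝ × ℝ) := hF.hasFDerivAt.clm_apply (hasFDerivAt_const e x)
  have hasFDerivAt_p : HasFDerivAt (fun y : ℝ × ℝ × ℝ => y.2.2) _ x :=
    (hasFDerivAt_snd (𝕜 := ℝ)).snd
  have hX : HasFDerivAt (lieCartanField F) _ x :=
    (hasFDerivAt_partial (0, 0, 1)).prodMk
      ((hasFDerivAt_p.mul (hasFDerivAt_partial (0, 0, 1))).prodMk
        ((hasFDerivAt_partial (1, 0, 0)).add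
          (hasFDerivAt_p.mul (hasFDerivAt_partial (0, 1, 0)))).neg)
  rw [hX.fderiv]
  simp only [ContinuousLinearMap.comp_zero, zero_add, ContinuousLinearMap.prod_apply,
    ContinuousLinearMap.flip_apply, add_apply, smul_apply, smul_eq_mul,
    ContinuousLinearMap.comp_apply, ContinuousLinearMap.coe_snd', neg_apply]
  ext <;> ring

open Polynomial in
theorem charpoly_of_proportional_rows {R : Type*} [CommRing R] (a b d e f p : R) :
    (!![a, b, 0; p * a, p * b, 0; d, e, f] : Matrix (Fin 3) (Fin 3) R).charpoly =
      X * (X - C (a + p * b)) * (X - C f) := by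
  have hcharmatrix : (!![a, b, 0; p * a, p * b, 0; d, e, f] : Matrix (Fin 3) (Fin 3) R).charmatrix =
      !![X - C a, -C b, 0; -(C p * C a), X - C p * C b, 0; -C d, -C e, X - C f] := by
    ext1 i j
    fin_cases i <;> fin_cases j <;> simp
  simp only [Matrix.charpoly, hcharmatrix, Matrix.det_fin_three, Matrix.of_apply, Matrix.cons_val,
    C_add, C_mul]
  ring

open Polynomial in
theorem charpoly_jacobianMatrix_lieCartanField (hF : ContDiffAt ℝ 2 F x)
    (hp : fderiv ℝ F x (0, 0, 1) = 0)
    (hpp : fderiv ℝ (fderiv ℝ F) x (0, 0, 1) (0, 0, 1) = 0) :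
    (jacobianMatrix (lieCartanField F) x).charpoly =
      X * (X - C (fderiv ℝ (fderiv ℝ F) x (1, x.2.2, 0) (0, 0, 1)))
        * (X - C (-(fderiv ℝ (fderiv ℝ F) x (1, x.2.2, 0) (0, 0, 1)
          + fderiv ℝ F x (0, 1, 0)))) := by
  have hsymm : IsSymmSndFDerivAt ℝ F x := hF.isSymmSndFDerivAt (by simp)
  simp only [jacobianMatrix, fderiv_lieCartanField_apply (differentiableAt_fderiv_of_contDiffAt hF),
    hp, hpp, mul_zero, zero_mul, one_mul, add_zero]
  rw [charpoly_of_proportional_rows, hsymm (0, 0, 1) (1, 0, 0), hsymm (0, 0, 1) (0, 1, 0),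
    map_contact_direction _ x.2.2, add_apply, smul_apply, smul_eq_mul]

end LieCartan

section BinaryEquation

/-- The function on the space of `(u, w, p)` that defines the binary differential equation
`A dw² + B du dw + C du² = 0`, with `p = dw/du`. -/
def binaryEquation (A B C : ℝ × ℝ → ℝ) (x : ℝ × ℝ × ℝ) : ℝ :=
  A (x.1, x.2.1) * x.2.2 ^ 2 + B (x.1, x.2.1) * x.2.2 + C (x.1, x.2.1)

variable {A B C : ℝ × ℝ → ℝ} {x : ℝ × ℝ × ℝ}

theorem contDiffAt_binaryEquation {n : WithTop ℕ∞} (hA : ContDiffAt ℝ n A (x.1, x.2.1))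
    (hB : ContDiffAt ℝ n B (x.1, x.2.1)) (hC : ContDiffAt ℝ n C (x.1, x.2.1)) :
    ContDiffAt ℝ n (binaryEquation A B C) x := by
  have hq : ContDiffAt ℝ n (fun y : ℝ × ℝ × ℝ => (y.1, y.2.1)) x := by fun_prop
  have hA' := hA.comp x hq
  have hB' := hB.comp x hq
  have hC' := hC.comp x hq
  have hp : ContDiffAt ℝ n (fun y : ℝ × ℝ × ℝ => y.2.2) x := by fun_prop
  exact ((hA'.mul (hp.pow 2)).add (hB'.mul hp)).add hC'

theorem hasFDerivAt_comp_uw {g : ℝ × ℝ → ℝ} (hg : DifferentiableAt ℝ g (x.1, x.2.1)) :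
    HasFDerivAt (fun y : ℝ × ℝ × ℝ => g (y.1, y.2.1)) ((fderiv ℝ g (x.1, x.2.1)).comp
      ((ContinuousLinearMap.fst ℝ ℝ (ℝ × ℝ)).prod
        ((ContinuousLinearMap.fst ℝ ℝ ℝ).comp (ContinuousLinearMap.snd ℝ ℝ (ℝ × ℝ))))) x :=
  hg.hasFDerivAt.comp (f := fun y : ℝ × ℝ × ℝ => (y.1, y.2.1)) x
    (hasFDerivAt_fst.prodMk hasFDerivAt_snd.fst)

theorem fderiv_binaryEquation_apply (hA : DifferentiableAt ℝ A (x.1, x.2.1))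
    (hB : DifferentiableAt ℝ B (x.1, x.2.1)) (hC : DifferentiableAt ℝ C (x.1, x.2.1))
    (v : ℝ × ℝ × ℝ) :
    fderiv ℝ (binaryEquation A B C) x v =
      fderiv ℝ A (x.1, x.2.1) (v.1, v.2.1) * x.2.2 ^ 2
        + fderiv ℝ B (x.1, x.2.1) (v.1, v.2.1) * x.2.2 + fderiv ℝ C (x.1, x.2.1) (v.1, v.2.1)
        + (2 * x.2.2 * A (x.1, x.2.1) + B (x.1, x.2.1)) * v.2.2 := by
  have hp : HasFDerivAt (fun y : ℝ × ℝ × ℝ => y.2.2) _ x := (hasFDerivAt_snd (𝕜 := ℝ)).snd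
  have hF : HasFDerivAt (binaryEquation A B C) _ x :=
    (((hasFDerivAt_comp_uw hA).mul (hp.pow 2)).add ((hasFDerivAt_comp_uw hB).mul hp)).add
      (hasFDerivAt_comp_uw hC)
  rw [hF.fderiv]
  simp only [Nat.add_one_sub_one, pow_one, nsmul_eq_mul, Nat.cast_ofNat, add_apply, smul_apply,
    ContinuousLinearMap.comp_apply, ContinuousLinearMap.coe_snd', smul_eq_mul,
    ContinuousLinearMap.prod_apply, ContinuousLinearMap.coe_fst']
  ring

theorem fderiv_binaryEquation_p_eventuallyEq (hA : ContDiffAt ℝ 1 A (x.1, x.2.1))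
    (hB : ContDiffAt ℝ 1 B (x.1, x.2.1)) (hC : ContDiffAt ℝ 1 C (x.1, x.2.1)) :
    (fun y => fderiv ℝ (binaryEquation A B C) y (0, 0, 1)) =ᶠ[nhds x]
      fun y => 2 * y.2.2 * A (y.1, y.2.1) + B (y.1, y.2.1) := by
  have hq : Filter.Tendsto (fun y : ℝ × ℝ × ℝ => (y.1, y.2.1)) (nhds x) (nhds (x.1, x.2.1)) :=
    Continuous.tendsto (by fun_prop) x
  filter_upwards [hq.eventually (hA.eventually (by simp)), hq.eventually (hB.eventually (by simp)),
    hq.eventually (hC.eventually (by simp))] with y hAy hBy hCy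
  rw [fderiv_binaryEquation_apply (hAy.differentiableAt one_ne_zero)
    (hBy.differentiableAt one_ne_zero) (hCy.differentiableAt one_ne_zero)]
  simp [← Prod.zero_eq_mk]

theorem fderiv_fderiv_binaryEquation_apply (hA : ContDiffAt ℝ 2 A (x.1, x.2.1))
    (hB : ContDiffAt ℝ 2 B (x.1, x.2.1)) (hC : ContDiffAt ℝ 2 C (x.1, x.2.1)) (v : ℝ × ℝ × ℝ) :
    fderiv ℝ (fderiv ℝ (binaryEquation A B C)) x v (0, 0, 1) =
      2 * x.2.2 * fderiv ℝ A (x.1, x.2.1) (v.1, v.2.1) + fderiv ℝ B (x.1, x.2.1) (v.1, v.2.1)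
        + 2 * A (x.1, x.2.1) * v.2.2 := by
  have hp : HasFDerivAt (fun y : ℝ × ℝ × ℝ => y.2.2) _ x := (hasFDerivAt_snd (𝕜 := ℝ)).snd
  have hF_p : HasFDerivAt
      (fun y : ℝ × ℝ × ℝ => 2 * y.2.2 * A (y.1, y.2.1) + B (y.1, y.2.1)) _ x :=
    ((hp.const_mul 2).mul (hasFDerivAt_comp_uw (hA.differentiableAt two_ne_zero))).add
      (hasFDerivAt_comp_uw (hB.differentiableAt two_ne_zero))
  rw [← fderiv_fderiv_apply_const
      (differentiableAt_fderiv_of_contDiffAt (contDiffAt_binaryEquation hA hB hC)),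
    (fderiv_binaryEquation_p_eventuallyEq (hA.of_le one_le_two) (hB.of_le one_le_two)
      (hC.of_le one_le_two)).fderiv_eq, hF_p.fderiv]
  simp only [add_apply, smul_apply, ContinuousLinearMap.comp_apply, ContinuousLinearMap.prod_apply,
    ContinuousLinearMap.coe_fst', ContinuousLinearMap.coe_snd', smul_eq_mul]
  ring

theorem lieCartanField_binaryEquation (hA : DifferentiableAt ℝ A (x.1, x.2.1))
    (hB : DifferentiableAt ℝ B (x.1, x.2.1)) (hC : DifferentiableAt ℝ C (x.1, x.2.1))
    (hA0 : A (x.1, x.2.1) = 0) (hB0 : B (x.1, x.2.1) = 0) :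
    lieCartanField (binaryEquation A B C) x =
      (0, 0, -(fderiv ℝ A (x.1, x.2.1) (1, x.2.2) * x.2.2 ^ 2
        + fderiv ℝ B (x.1, x.2.1) (1, x.2.2) * x.2.2 + fderiv ℝ C (x.1, x.2.1) (1, x.2.2))) := by
  have hF := fderiv_binaryEquation_apply hA hB hC
  have hp : fderiv ℝ (binaryEquation A B C) x (0, 0, 1) = 0 := by
    simp [hF, hA0, hB0, ← Prod.zero_eq_mk]
  rw [lieCartanField_of_fderiv_eq_zero hp, hF, mul_zero, add_zero]

theorem charpoly_jacobianMatrix_binaryEquation (hA : ContDiffAt ℝ 2 A (x.1, x.2.1))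
    (hB : ContDiffAt ℝ 2 B (x.1, x.2.1)) (hC : ContDiffAt ℝ 2 C (x.1, x.2.1))
    (hA0 : A (x.1, x.2.1) = 0) (hB0 : B (x.1, x.2.1) = 0) {μ ν : ℝ}
    (hμ : 2 * x.2.2 * fderiv ℝ A (x.1, x.2.1) (1, x.2.2) + fderiv ℝ B (x.1, x.2.1) (1, x.2.2) = μ)
    (hν : -(μ + (fderiv ℝ A (x.1, x.2.1) (0, 1) * x.2.2 ^ 2
      + fderiv ℝ B (x.1, x.2.1) (0, 1) * x.2.2 + fderiv ℝ C (x.1, x.2.1) (0, 1))) = ν) :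
    (jacobianMatrix (lieCartanField (binaryEquation A B C)) x).charpoly =
      Polynomial.X * (Polynomial.X - Polynomial.C μ) * (Polynomial.X - Polynomial.C ν) := by
  have hF := fderiv_binaryEquation_apply (hA.differentiableAt two_ne_zero)
    (hB.differentiableAt two_ne_zero) (hC.differentiableAt two_ne_zero)
  have hF_p := fderiv_fderiv_binaryEquation_apply hA hB hC
  rw [charpoly_jacobianMatrix_lieCartanField (contDiffAt_binaryEquation hA hB hC)
    (by simp [hF, hA0, hB0, ← Prod.zero_eq_mk]) (by simp [hF_p, hA0, ← Prod.zero_eq_mk]),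
    hF_p, hF, mul_zero, mul_zero, add_zero, add_zero, hμ, hν]

end BinaryEquation

section CurvatureLines

variable {h : ℝ × ℝ → ℝ}

/-- The function defining the extended differential equation of the principal curvature lines in
the end chart. -/
def curvatureLineEquation (h : ℝ × ℝ → ℝ) : ℝ × ℝ × ℝ → ℝ :=
  binaryEquation (N1 h) (N2 h) fun q => q.2 * N3 h q

theorem contDiffAt_partials {n : WithTop ℕ∞} {q : ℝ × ℝ} (hh : ContDiffAt ℝ (n + 2) h q) :
    ContDiffAt ℝ n (pdu h) q ∧ ContDiffAt ℝ n (pdw h) q ∧ ContDiffAt ℝ n (pdu (pdu h)) q ∧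
      ContDiffAt ℝ n (pdw (pdu h)) q ∧ ContDiffAt ℝ n (pdw (pdw h)) q := by
  have hn : n + 1 + 1 ≤ n + 2 := by rw [add_assoc, one_add_one_eq_two]
  have hu := contDiffAt_pdu hh hn
  have hw := contDiffAt_pdw hh hn
  exact ⟨hu.of_le le_self_add, hw.of_le le_self_add, contDiffAt_pdu hu le_rfl,
    contDiffAt_pdw hu le_rfl, contDiffAt_pdw hw le_rfl⟩

theorem contDiffAt_N1_N2_N3 {n : WithTop ℕ∞} {q : ℝ × ℝ} (hh : ContDiffAt ℝ (n + 2) h q) :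
    ContDiffAt ℝ n (N1 h) q ∧ ContDiffAt ℝ n (N2 h) q ∧ ContDiffAt ℝ n (N3 h) q := by
  obtain ⟨hu, hw, huu, huw, hww⟩ := contDiffAt_partials hh
  replace hh := hh.of_le le_self_add
  unfold N1 N2 N3
  refine ⟨?_, ?_, ?_⟩ <;> fun_prop

theorem differentiableAt_partials {q : ℝ × ℝ} (hh : ContDiffAt ℝ 3 h q) :
    DifferentiableAt ℝ h q ∧ DifferentiableAt ℝ (pdu h) q ∧ DifferentiableAt ℝ (pdw h) q ∧
      DifferentiableAt ℝ (pdu (pdu h)) q ∧ DifferentiableAt ℝ (pdw (pdu h)) q ∧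
      DifferentiableAt ℝ (pdw (pdw h)) q := by
  obtain ⟨hu, hw, huu, huw, hww⟩ := contDiffAt_partials (n := 1) (hh.of_le (by norm_num))
  exact ⟨hh.differentiableAt three_ne_zero, hu.differentiableAt one_ne_zero,
    hw.differentiableAt one_ne_zero, huu.differentiableAt one_ne_zero,
    huw.differentiableAt one_ne_zero, hww.differentiableAt one_ne_zero⟩

theorem fderiv_N1_origin (hh : ContDiffAt ℝ 3 h (0, 0)) (h0 : h (0, 0) = 0)
    (huw0 : pdw (pdu h) (0, 0) = 0) :
    fderiv ℝ (N1 h) (0, 0) = -fderiv ℝ (pdw (pdu h)) (0, 0) := by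
  obtain ⟨dh, du, dw, -, duw, dww⟩ := differentiableAt_partials hh
  unfold N1
  exact fderiv_mul_sub_mul_of_eq_zero (by fun_prop) (by fun_prop) (by fun_prop) duw
    (by simp) (by simp [h0]) (by simp [h0]) huw0

theorem fderiv_N1_origin_apply (hh : ContDiffAt ℝ 3 h (0, 0)) (h0 : h (0, 0) = 0)
    (huw0 : pdw (pdu h) (0, 0) = 0) (v : ℝ × ℝ) :
    fderiv ℝ (N1 h) (0, 0) v =
      -(v.1 * pdw (pdu (pdu h)) (0, 0) + v.2 * pdw (pdw (pdu h)) (0, 0)) := by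
  rw [fderiv_N1_origin hh h0 huw0, neg_apply, fderiv_apply_eq_pdu_pdw,
    pdu_pdw_comm (contDiffAt_pdu hh (by norm_num))]

theorem fderiv_N2_origin (hh : ContDiffAt ℝ 3 h (0, 0)) (h0 : h (0, 0) = 0)
    (huu0 : pdu (pdu h) (0, 0) = 0) :
    fderiv ℝ (N2 h) (0, 0) = -fderiv ℝ (pdu (pdu h)) (0, 0) := by
  obtain ⟨dh, du, dw, duu, -, dww⟩ := differentiableAt_partials hh
  -- `w²` is split so that both factors of the first product vanish at the origin.
  have hN2 : N2 h = fun q => q.2 * (q.2 * (1 + pdu h q ^ 2) * pdw (pdw h) q)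
      - (1 + q.1 ^ 2 + (q.2 * pdw h q - h q) ^ 2) * pdu (pdu h) q := by
    funext q
    simp only [N2]
    ring
  rw [hN2]
  exact fderiv_mul_sub_mul_of_eq_zero (by fun_prop) (by fun_prop) (by fun_prop) duu
    rfl (by simp) (by simp [h0]) huu0

theorem fderiv_N2_origin_apply (hh : ContDiffAt ℝ 3 h (0, 0)) (h0 : h (0, 0) = 0)
    (huu0 : pdu (pdu h) (0, 0) = 0) (v : ℝ × ℝ) :
    fderiv ℝ (N2 h) (0, 0) v =
      -(v.1 * pdu (pdu (pdu h)) (0, 0) + v.2 * pdw (pdu (pdu h)) (0, 0)) := by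
  rw [fderiv_N2_origin hh h0 huu0, neg_apply, fderiv_apply_eq_pdu_pdw]

theorem fderiv_snd_mul_N3_origin (hh : ContDiffAt ℝ 3 h (0, 0)) (huu0 : pdu (pdu h) (0, 0) = 0) :
    fderiv ℝ (fun q => q.2 * N3 h q) (0, 0) = 0 := by
  obtain ⟨-, -, hN3⟩ := contDiffAt_N1_N2_N3 (n := 1) (hh.of_le (by norm_num))
  exact fderiv_mul_of_eq_zero differentiableAt_snd (hN3.differentiableAt one_ne_zero) rfl
    (by simp [N3, huu0])

theorem lieCartanField_curvatureLineEquation (hh : ContDiffAt ℝ 3 h (0, 0)) (h0 : h (0, 0) = 0)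
    (huu0 : pdu (pdu h) (0, 0) = 0) (huw0 : pdw (pdu h) (0, 0) = 0) (p : ℝ) :
    let a30 := pdu (pdu (pdu h)) (0, 0)
    let a21 := pdw (pdu (pdu h)) (0, 0)
    let a12 := pdw (pdw (pdu h)) (0, 0)
    lieCartanField (curvatureLineEquation h) (0, 0, p) =
      (0, 0, p * (a30 + 2 * a21 * p + a12 * p ^ 2)) := by
  intro a30 a21 a12
  obtain ⟨hN1, hN2, hN3⟩ := contDiffAt_N1_N2_N3 (n := 1) (hh.of_le (by norm_num))
  rw [curvatureLineEquation, lieCartanField_binaryEquation (hN1.differentiableAt one_ne_zero)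
    (hN2.differentiableAt one_ne_zero)
    (differentiableAt_snd.fun_mul (hN3.differentiableAt one_ne_zero))
    (by simp [N1, huw0]) (by simp [N2, huu0])]
  simp only [fderiv_N1_origin_apply hh h0 huw0, fderiv_N2_origin_apply hh h0 huu0,
    fderiv_snd_mul_N3_origin hh huu0, zero_apply, Prod.mk.injEq, true_and]
  ring

theorem charpoly_jacobianMatrix_curvatureLineEquation (hh : ContDiffAt ℝ 4 h (0, 0))
    (h0 : h (0, 0) = 0) (huu0 : pdu (pdu h) (0, 0) = 0) (huw0 : pdw (pdu h) (0, 0) = 0)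
    (p : ℝ) :
    let a30 := pdu (pdu (pdu h)) (0, 0)
    let a21 := pdw (pdu (pdu h)) (0, 0)
    let a12 := pdw (pdw (pdu h)) (0, 0)
    (jacobianMatrix (lieCartanField (curvatureLineEquation h)) (0, 0, p)).charpoly =
      Polynomial.X * (Polynomial.X + Polynomial.C (a30 + 3 * a21 * p + 2 * a12 * p ^ 2))
        * (Polynomial.X - Polynomial.C (a30 + 4 * a21 * p + 3 * a12 * p ^ 2)) := by
  intro a30 a21 a12
  have hh3 : ContDiffAt ℝ 3 h (0, 0) := hh.of_le (by norm_num)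
  have dN1 := fderiv_N1_origin_apply hh3 h0 huw0
  have dN2 := fderiv_N2_origin_apply hh3 h0 huu0
  have dwN3 := fderiv_snd_mul_N3_origin hh3 huu0
  obtain ⟨hN1, hN2, hN3⟩ := contDiffAt_N1_N2_N3 (n := 2) (hh.of_le (by norm_num))
  rw [curvatureLineEquation, charpoly_jacobianMatrix_binaryEquation hN1 hN2
    (contDiffAt_snd.mul hN3) (by simp [N1, huw0]) (by simp [N2, huu0])
    (μ := -(a30 + 3 * a21 * p + 2 * a12 * p ^ 2)) (ν := a30 + 4 * a21 * p + 3 * a12 * p ^ 2)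
    (by simp only [dN1, dN2]; ring) (by simp only [dN1, dN2, dwN3, zero_apply]; ring),
    Polynomial.C_neg, sub_neg_eq_add]

theorem stmt_6_general (hh : ContDiffAt ℝ 4 h (0, 0)) (h0 : h (0, 0) = 0)
    (huu0 : pdu (pdu h) (0, 0) = 0) (huw0 : pdw (pdu h) (0, 0) = 0) (p : ℝ) :
    let a30 := pdu (pdu (pdu h)) (0, 0)
    let a21 := pdw (pdu (pdu h)) (0, 0)
    let a12 := pdw (pdw (pdu h)) (0, 0)
    let X := lieCartanField (curvatureLineEquation h)
    (X (0, 0, p) = (0, 0, p * (a30 + 2 * a21 * p + a12 * p ^ 2)) ∧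
      (X (0, 0, p) = 0 ↔ p * (a30 + 2 * a21 * p + a12 * p ^ 2) = 0)) ∧
    (jacobianMatrix X (0, 0, p)).charpoly =
      Polynomial.X * (Polynomial.X + Polynomial.C (a30 + 3 * a21 * p + 2 * a12 * p ^ 2))
        * (Polynomial.X - Polynomial.C (a30 + 4 * a21 * p + 3 * a12 * p ^ 2)) := by
  intro a30 a21 a12 X
  have hX : X (0, 0, p) = (0, 0, p * (a30 + 2 * a21 * p + a12 * p ^ 2)) :=
    lieCartanField_curvatureLineEquation (hh.of_le (by norm_num)) h0 huu0 huw0 p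
  exact ⟨⟨hX, by simp [hX]⟩,
    charpoly_jacobianMatrix_curvatureLineEquation hh h0 huu0 huw0 p⟩

end CurvatureLines

/-- at an umbilic–inflexion end point (`a = b = 0`), the Lie–Cartan vector
field of the extended curvature-line equation vanishes along the projective line exactly at
the roots of `p(a₃₀ + 2a₂₁p + a₁₂p²)`, and the characteristic polynomial of its Jacobian
`DX(0,0,p)` is `λ(λ + (a₃₀ + 3a₂₁p + 2a₁₂p²))(λ − (a₃₀ + 4a₂₁p + 3a₁₂p²))`. -/
theorem stmt_6 (U : Set (ℝ × ℝ)) (hU : U ∈ nhds ((0, 0) : ℝ × ℝ)) (h : ℝ × ℝ → ℝ)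
    (hh : ContDiffOn ℝ 4 h U) (h0 : h (0, 0) = 0) (hu0 : pdu h (0, 0) = 0)
    (huu0 : pdu (pdu h) (0, 0) = 0) (huw0 : pdw (pdu h) (0, 0) = 0)
    (F : ℝ × ℝ × ℝ → ℝ)
    (hF : F = fun x => N1 h (x.1, x.2.1) * x.2.2 ^ 2 + N2 h (x.1, x.2.1) * x.2.2
      + x.2.1 * N3 h (x.1, x.2.1))
    (X : ℝ × ℝ × ℝ → ℝ × ℝ × ℝ)
    (hX : X = fun x => (fderiv ℝ F x (0, 0, 1), x.2.2 * fderiv ℝ F x (0, 0, 1),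
      -(fderiv ℝ F x (1, 0, 0) + x.2.2 * fderiv ℝ F x (0, 1, 0)))) :
    let a30 := pdu (pdu (pdu h)) (0, 0)
    let a21 := pdw (pdu (pdu h)) (0, 0)
    let a12 := pdw (pdw (pdu h)) (0, 0)
    ∀ p : ℝ,
      (X (0, 0, p) = (0, 0, p * (a30 + 2 * a21 * p + a12 * p ^ 2)) ∧
       (X (0, 0, p) = 0 ↔ p * (a30 + 2 * a21 * p + a12 * p ^ 2) = 0)) ∧
      (let c1 := fderiv ℝ X ((0 : ℝ), (0 : ℝ), p) (1, 0, 0)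
       let c2 := fderiv ℝ X ((0 : ℝ), (0 : ℝ), p) (0, 1, 0)
       let c3 := fderiv ℝ X ((0 : ℝ), (0 : ℝ), p) (0, 0, 1)
       let J : Matrix (Fin 3) (Fin 3) ℝ :=
         !![c1.1, c2.1, c3.1; c1.2.1, c2.2.1, c3.2.1; c1.2.2, c2.2.2, c3.2.2]
       J.charpoly =
         Polynomial.X * (Polynomial.X + Polynomial.C (a30 + 3 * a21 * p + 2 * a12 * p ^ 2))
           * (Polynomial.X - Polynomial.C (a30 + 4 * a21 * p + 3 * a12 * p ^ 2))) := by
  subst hF hX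
  exact fun p => stmt_6_general (hh.contDiffAt hU) h0 huu0 huw0 p
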